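/- Let Λ be a lattice of full rank in ℝ^n with successive minima λ_1 ≤ … ≤ λ_n. Then there exist a constant c₀ > 0 depending only on n and a ℤ-basis v^1,…,v^n of Λ such that (i) |v^s|_2 ≤ c₀ λ_s for all s = 1,…,n, and (ii) I(v^s) ⊆ I(v^{s+1}) for s = 1,…,n−1, where I(v) := {h ∈ {1,…,n} : v_h ≠ 0}. -/

import Mathlib

/-- The Euclidean norm of a vector in `ι → ℝ`. -/
noncomputable def enorm2 {ι : Type*} [Fintype ι] (v : ι → ℝ) : ℝ := Real.sqrt (∑ i, v i ^ 2)

/-- The `s`-th successive minimum of a set `Λ ⊆ ℝ^ι` (with respect to the Euclidean norm). -/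
noncomputable def succMin {ι : Type*} [Fintype ι] (Λ : Set (ι → ℝ)) (s : ℕ) : ℝ :=
  sInf {r : ℝ | 0 < r ∧ ∃ w : Fin s → ι → ℝ,
    (∀ k, w k ∈ Λ) ∧ LinearIndependent ℝ w ∧ ∀ k, enorm2 (w k) ≤ r}

/-- The support `I(v) = {h : v_h ≠ 0}` of a vector. -/
def Iset {ι : Type*} (v : ι → ℝ) : Set ι := {h | v h ≠ 0}

/-!
Choose greedily linearly independent lattice vectors `w₁, …, wₙ` with `|wᵢ| ≤ λᵢ`, and pass from
`L ∩ span ℝ {w₁, …, wₛ₋₁}` to `L ∩ span ℝ {w₁, …, wₛ}` one vector at a time. Take a functional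
vanishing on the first span with value `1` at `wₛ`. Reducing modulo `w₁, …, wₛ₋₁` shows that its
values on the larger lattice lying in `(0, 1]` are attained at lattice points of bounded norm, so
they are finite in number and the values form an infinite cyclic group. A reduced preimage `u` of
its generator extends any `ℤ`-basis `v₁, …, vₛ₋₁` of the smaller lattice, and `|u| ≤ s λₛ`.

Replacing `u` by `vₛ = u + k vₛ₋₁` does not affect this. For each coordinate at most one `k` makes
a nonzero coordinate of `vₛ₋₁` vanish in `vₛ`, so one of the `n + 1` values `k = 0, …, n` makes the
supports nested, at the cost of a bounded factor in the norm.
-/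

open Module Submodule

section Reduction

theorem exists_mem_span_int_seminorm_sub_le {E ι : Type*} [AddCommGroup E] [Module ℝ E] [Fintype ι]
    (p : Seminorm ℝ E) (w : ι → E) {y : E} (hy : y ∈ span ℝ (Set.range w)) :
    ∃ l ∈ span ℤ (Set.range w), p (y - l) ≤ ∑ i, p (w i) := by
  obtain ⟨c, rfl⟩ := (mem_span_range_iff_exists_fun ℝ).1 hy
  refine ⟨∑ i, ⌊c i⌋ • w i, sum_mem fun i _ => smul_mem _ _ (subset_span ⟨i, rfl⟩), ?_⟩
  calc p (∑ i, c i • w i - ∑ i, ⌊c i⌋ • w i)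
      = p (∑ i, Int.fract (c i) • w i) := by
        simp only [← Finset.sum_sub_distrib, Int.fract, sub_smul, Int.cast_smul_eq_zsmul]
    _ ≤ ∑ i, p (Int.fract (c i) • w i) :=
        Finset.le_sum_of_subadditive p (map_zero p).le (map_add_le_add p) _ _
    _ ≤ ∑ i, p (w i) := Finset.sum_le_sum fun i _ => by
        rw [map_smul_eq_mul, Real.norm_of_nonneg (Int.fract_nonneg _)]
        exact mul_le_of_le_one_left (apply_nonneg p _) (Int.fract_lt_one _).le

theorem exists_eq_zmultiples_of_finite_inter_Ioc {G : Type*} [AddCommGroup G] [LinearOrder G]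
    [IsOrderedAddMonoid G] [Archimedean G] (H : AddSubgroup G) {a : G} (ha : a ∈ H) (ha0 : 0 < a)
    (hfin : ((H : Set G) ∩ Set.Ioc 0 a).Finite) :
    ∃ g ∈ Set.Ioc 0 a, H = AddSubgroup.zmultiples g := by
  obtain ⟨g, ⟨hgH, hg⟩, hmin⟩ :=
    Set.exists_min_image ((H : Set G) ∩ Set.Ioc 0 a) id hfin ⟨a, ha, ha0, le_rfl⟩
  have hleast : IsLeast {x | x ∈ H ∧ 0 < x} g := by
    refine ⟨⟨hgH, hg.1⟩, fun x hx => ?_⟩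
    rcases le_total x a with hxa | hax
    · exact hmin x ⟨hx.1, hx.2, hxa⟩
    · exact hg.2.trans hax
  refine ⟨g, hg, ?_⟩
  rw [AddSubgroup.cyclic_of_min hleast, AddSubgroup.zmultiples_eq_closure]

theorem exists_dual_le_ker_apply_eq_one {K V : Type*} [Field K] [AddCommGroup V] [Module K V]
    {W : Submodule K V} {x : V} (hx : x ∉ W) :
    ∃ φ : V →ₗ[K] K, W ≤ LinearMap.ker φ ∧ φ x = 1 := by
  obtain ⟨f, hfx, hf⟩ := exists_le_ker_of_notMem hx
  exact ⟨(f x)⁻¹ • f, fun y hy => by simp [LinearMap.mem_ker.1 (hf hy)], by simp [hfx]⟩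

theorem sub_apply_smul_mem_of_mem_span_insert {K V : Type*} [Ring K] [AddCommGroup V] [Module K V]
    {S : Set V} {x y : V} {φ : V →ₗ[K] K} (hφ : span K S ≤ LinearMap.ker φ) (hφx : φ x = 1)
    (hy : y ∈ span K (insert x S)) : y - φ y • x ∈ span K S := by
  obtain ⟨a, z, hz, rfl⟩ := mem_span_insert.1 hy
  simpa [hφx, LinearMap.mem_ker.1 (hφ hz)] using hz

theorem sup_span_singleton_add {R M : Type*} [Ring R] [AddCommGroup M] [Module R M]
    {N : Submodule R M} {q : M} (hq : q ∈ N) (u : M) : N ⊔ R ∙ (u + q) = N ⊔ R ∙ u := by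
  have key : ∀ {q : M}, q ∈ N → ∀ u, N ⊔ R ∙ (u + q) ≤ N ⊔ R ∙ u := fun hq u =>
    sup_le le_sup_left <| (span_singleton_le_iff_mem _ _).2 <|
      add_mem (mem_sup_right (mem_span_singleton_self u)) (mem_sup_left hq)
  exact (key hq u).antisymm (by simpa using key (neg_mem hq) (u + q))

end Reduction

section Lattice

variable {E : Type*} [AddCommGroup E] [Module ℝ E] {p : Seminorm ℝ E} {L : Submodule ℤ E}
  {ι : Type*} {w : ι → E} {x : E}

theorem exists_mem_apply_eq_seminorm_le [Fintype ι] (hw : ∀ i, w i ∈ L) {φ : E →ₗ[ℝ] ℝ}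
    (hφ : span ℝ (Set.range w) ≤ LinearMap.ker φ) (hφx : φ x = 1) {y : E}
    (hy : y ∈ L ⊓ (span ℝ (insert x (Set.range w))).restrictScalars ℤ) :
    ∃ z ∈ L ⊓ (span ℝ (insert x (Set.range w))).restrictScalars ℤ,
      φ z = φ y ∧ p z ≤ |φ y| * p x + ∑ i, p (w i) := by
  obtain ⟨l, hl, hle⟩ := exists_mem_span_int_seminorm_sub_le p w
    (sub_apply_smul_mem_of_mem_span_insert hφ hφx hy.2)
  have hlw : l ∈ span ℝ (Set.range w) := span_le_restrictScalars ℤ ℝ _ hl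
  have hlL : l ∈ L := span_le.2 (Set.range_subset_iff.2 hw) hl
  refine ⟨y - l, ⟨sub_mem hy.1 hlL, sub_mem hy.2 (span_mono (Set.subset_insert _ _) hlw)⟩,
    by simp [LinearMap.mem_ker.1 (hφ hlw)], ?_⟩
  calc p (y - l) = p (φ y • x + (y - φ y • x - l)) := by congr 1; abel
    _ ≤ p (φ y • x) + p (y - φ y • x - l) := map_add_le_add p _ _
    _ ≤ |φ y| * p x + ∑ i, p (w i) := by
        rw [map_smul_eq_mul, Real.norm_eq_abs]
        gcongr

theorem exists_map_eq_zmultiples [Finite ι] (hL : ∀ R, {y | y ∈ L ∧ p y ≤ R}.Finite)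
    (hw : ∀ i, w i ∈ L) (hxL : x ∈ L) {φ : E →ₗ[ℝ] ℝ}
    (hφ : span ℝ (Set.range w) ≤ LinearMap.ker φ) (hφx : φ x = 1) :
    ∃ g ∈ Set.Ioc (0 : ℝ) 1,
      (L ⊓ (span ℝ (insert x (Set.range w))).restrictScalars ℤ).toAddSubgroup.map
        φ.toAddMonoidHom = AddSubgroup.zmultiples g := by
  cases nonempty_fintype ι
  refine exists_eq_zmultiples_of_finite_inter_Ioc _
    ⟨x, ⟨hxL, subset_span (Set.mem_insert _ _)⟩, hφx⟩ one_pos ?_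
  refine ((hL (p x + ∑ i, p (w i))).image φ).subset ?_
  rintro _ ⟨⟨y, hy, rfl⟩, hpos, hle⟩
  obtain ⟨z, hz, hzy, hpz⟩ := exists_mem_apply_eq_seminorm_le (p := p) hw hφ hφx hy
  refine ⟨z, ⟨hz.1, hpz.trans ?_⟩, hzy⟩
  have habs : |φ y| ≤ 1 := (abs_of_pos hpos).trans_le hle
  gcongr
  exact mul_le_of_le_one_left (apply_nonneg p x) habs

theorem exists_inf_span_insert_eq_sup [Fintype ι] (hL : ∀ R, {y | y ∈ L ∧ p y ≤ R}.Finite)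
    (hw : ∀ i, w i ∈ L) (hxL : x ∈ L) (hx : x ∉ span ℝ (Set.range w)) :
    ∃ u, p u ≤ p x + ∑ i, p (w i) ∧
      L ⊓ (span ℝ (insert x (Set.range w))).restrictScalars ℤ =
        L ⊓ (span ℝ (Set.range w)).restrictScalars ℤ ⊔ ℤ ∙ u := by
  obtain ⟨φ, hφ, hφx⟩ := exists_dual_le_ker_apply_eq_one hx
  obtain ⟨g, ⟨hg0, hg1⟩, hg⟩ := exists_map_eq_zmultiples hL hw hxL hφ hφx
  obtain ⟨u₀, hu₀, hu₀g⟩ : g ∈ _ := hg ▸ AddSubgroup.mem_zmultiples g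
  obtain ⟨u, hu, huφ, hpu⟩ := exists_mem_apply_eq_seminorm_le (p := p) hw hφ hφx hu₀
  replace huφ : φ u = g := huφ.trans hu₀g
  refine ⟨u, hpu.trans ?_, le_antisymm (fun y hy => ?_) (sup_le ?_ ?_)⟩
  · have habs : |φ u₀| ≤ 1 := by
      rw [show φ u₀ = g from hu₀g, abs_of_pos hg0]
      exact hg1
    gcongr
    exact mul_le_of_le_one_left (apply_nonneg p x) habs
  · obtain ⟨k, hk⟩ : φ y ∈ AddSubgroup.zmultiples g := hg ▸ ⟨y, hy, rfl⟩
    have hφk : φ (y - k • u) = 0 := by simpa [huφ, sub_eq_zero] using hk.symm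
    have hyu := sub_mem hy (smul_mem _ k hu)
    have hspan := sub_apply_smul_mem_of_mem_span_insert hφ hφx hyu.2
    rw [hφk, zero_smul, sub_zero] at hspan
    exact mem_sup.2 ⟨_, ⟨hyu.1, hspan⟩, _, mem_span_singleton.2 ⟨k, rfl⟩, sub_add_cancel _ _⟩
  · exact inf_le_inf_left _ (span_mono (Set.subset_insert _ _))
  · exact (span_singleton_le_iff_mem _ _).2 hu

end Lattice

section Support

theorem exists_nat_support_subset_support_add_smul {κ K : Type*} [Fintype κ] [Field K] [CharZero K]
    (a q : κ → K) :
    ∃ k ≤ Fintype.card κ, Function.support q ⊆ Function.support (a + (k : K) • q) := by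
  classical
  have hcard : (Finset.univ.image fun h => -a h / q h).card <
      ((Finset.range (Fintype.card κ + 1)).image (Nat.cast : ℕ → K)).card := by
    rw [Finset.card_image_of_injective _ Nat.cast_injective, Finset.card_range]
    exact Nat.lt_succ_of_le Finset.card_image_le
  obtain ⟨_, hmem, hk⟩ := Finset.exists_mem_notMem_of_card_lt_card hcard
  obtain ⟨k, hkcard, rfl⟩ := Finset.mem_image.1 hmem
  refine ⟨k, Finset.mem_range_succ_iff.1 hkcard, fun h hq h0 => hk ?_⟩
  refine Finset.mem_image.2 ⟨h, Finset.mem_univ h, ?_⟩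
  rw [div_eq_iff hq]
  simp only [Pi.add_apply, Pi.smul_apply, smul_eq_mul] at h0
  linear_combination -h0

theorem monotone_comp_snoc {α β : Type*} [Preorder β] (g : α → β) {m : ℕ} {v : Fin m → α} {x : α}
    (hv : Monotone fun i => g (v i)) (hx : ∀ i, g (v i) ≤ g x) :
    Monotone fun i => g ((Fin.snoc v x : Fin (m + 1) → α) i) := by
  intro i j hij
  induction j using Fin.lastCases with
  | last => induction i using Fin.lastCases <;> simp [hx]
  | cast j =>
    induction i using Fin.lastCases with
    | last => exact absurd hij (Fin.castSucc_lt_last j).not_ge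
    | cast i => simpa using hv (Fin.castSucc_le_castSucc_iff.1 hij)

variable {E : Type*} [AddCommGroup E] [Module ℝ E] {p : Seminorm ℝ E} {L : Submodule ℤ E}
  {κ : Type*} [Fintype κ]

theorem exists_add_nsmul_support_subset_seminorm_le (T : E →ₗ[ℝ] κ → ℝ) (u q : E) :
    ∃ k : ℕ, Function.support (T q) ⊆ Function.support (T (u + k • q)) ∧
      p (u + k • q) ≤ p u + Fintype.card κ * p q := by
  obtain ⟨k, hk, hsupp⟩ := exists_nat_support_subset_support_add_smul (T u) (T q)
  refine ⟨k, by simpa [← Nat.cast_smul_eq_nsmul ℝ] using hsupp, ?_⟩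
  calc p (u + k • q) ≤ p u + p (k • q) := map_add_le_add p _ _
    _ = p u + k * p q := by
        rw [← Nat.cast_smul_eq_nsmul ℝ, map_smul_eq_mul, Real.norm_natCast]
    _ ≤ p u + Fintype.card κ * p q := by gcongr

theorem exists_mem_span_forall_support_subset (T : E →ₗ[ℝ] κ → ℝ) {m : ℕ} {v : Fin m → E}
    (hv : Monotone fun s => Function.support (T (v s))) {c : ℝ}
    (hpv : ∀ s : Fin m, p (v s) ≤ (s + 1) * (Fintype.card κ + 1) ^ (s + 1 : ℕ) * c) :
    ∃ q ∈ span ℤ (Set.range v), (∀ s, Function.support (T (v s)) ⊆ Function.support (T q)) ∧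
      p q ≤ m * (Fintype.card κ + 1) ^ m * c := by
  cases m with
  | zero => exact ⟨0, zero_mem _, fun s => s.elim0, by simp⟩
  | succ m =>
    exact ⟨v (Fin.last m), subset_span ⟨_, rfl⟩, fun s => hv (Fin.le_last s),
      by simpa using hpv (Fin.last m)⟩

theorem add_mul_le_succ_mul_pow_succ {c : ℝ} (m K : ℕ) (hc : 0 ≤ c) :
    (m + 1) * c + K * (m * (K + 1) ^ m * c) ≤ (m + 1) * (K + 1) ^ (m + 1) * c := by
  have hpow : (1 : ℝ) ≤ (K + 1) ^ m := one_le_pow₀ (by simp)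
  calc (m + 1) * c + K * (m * (K + 1) ^ m * c)
      ≤ (m + 1) * (K + 1) ^ m * c + K * ((m + 1) * (K + 1) ^ m * c) := by
        gcongr
        · exact le_mul_of_one_le_right (by positivity) hpow
        · linarith
    _ = (m + 1) * (K + 1) ^ (m + 1) * c := by ring

theorem exists_int_basis_of_linearIndependent (hL : ∀ R, {y | y ∈ L ∧ p y ≤ R}.Finite)
    (T : E →ₗ[ℝ] κ → ℝ) {m : ℕ} {w : Fin m → E} (hw : LinearIndependent ℝ w)
    (hwL : ∀ i, w i ∈ L) {B : Fin m → ℝ} (hB : Monotone B) (hwB : ∀ i, p (w i) ≤ B i) :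
    ∃ v : Fin m → E, span ℤ (Set.range v) = L ⊓ (span ℝ (Set.range w)).restrictScalars ℤ ∧
      (∀ s : Fin m, p (v s) ≤ (s + 1) * (Fintype.card κ + 1) ^ (s + 1 : ℕ) * B s) ∧
      Monotone fun s => Function.support (T (v s)) := by
  induction m with
  | zero => exact ⟨w, by simp, fun s => s.elim0, fun s => s.elim0⟩
  | succ m ih =>
    cases w using Fin.snocCases with | snoc w x
    obtain ⟨hw, hx⟩ := linearIndependent_finSnoc.1 hw
    have hwL' : ∀ i, w i ∈ L := fun i => by simpa using hwL i.castSucc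
    have hwB' : ∀ i, p (w i) ≤ B i.castSucc := fun i => by simpa using hwB i.castSucc
    have hxL : x ∈ L := by simpa using hwL (Fin.last m)
    have hxB : p x ≤ B (Fin.last m) := by simpa using hwB (Fin.last m)
    obtain ⟨v, hspan, hpv, hsupp⟩ := ih hw hwL' (hB.comp Fin.strictMono_castSucc.monotone) hwB'
    obtain ⟨u, hpu, hu⟩ := exists_inf_span_insert_eq_sup hL hwL' hxL hx
    obtain ⟨q, hq, hqsupp, hpq⟩ := exists_mem_span_forall_support_subset (p := p) T hsupp
      fun s => (hpv s).trans (mul_le_mul_of_nonneg_left (hB (Fin.le_last _)) (by positivity))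
    obtain ⟨k, hk, hpk⟩ := exists_add_nsmul_support_subset_seminorm_le (p := p) T u q
    refine ⟨Fin.snoc v (u + k • q), ?_, fun s => ?_, ?_⟩
    · rw [Fin.range_snoc, Fin.range_snoc, span_insert, sup_comm, hu, ← hspan,
        sup_span_singleton_add (nsmul_mem hq k)]
    · induction s using Fin.lastCases with
      | cast s => simpa using hpv s
      | last =>
        have hsum : ∑ i, p (w i) ≤ m * B (Fin.last m) := by
          simpa using Finset.sum_le_card_nsmul Finset.univ _ _
            fun i _ => (hwB' i).trans (hB (Fin.le_last _))
        have hpu' : p u ≤ (m + 1) * B (Fin.last m) := by linarith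
        simp only [Fin.snoc_last, Fin.val_last]
        calc p (u + k • q) ≤ p u + Fintype.card κ * p q := hpk
          _ ≤ (m + 1) * B (Fin.last m) +
              Fintype.card κ * (m * (Fintype.card κ + 1) ^ m * B (Fin.last m)) := by gcongr
          _ ≤ _ := add_mul_le_succ_mul_pow_succ m _ ((apply_nonneg p x).trans hxB)
    · exact monotone_comp_snoc (fun y => Function.support (T y)) hsupp
        fun i => (hqsupp i).trans hk

end Support

section SuccessiveMin

variable {E : Type*} [AddCommGroup E] [Module ℝ E] {p : Seminorm ℝ E}

/-- The radii `r > 0` for which the closed `p`-ball of radius `r` contains `s` linearly independent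
vectors of `Λ`; their infimum is the `s`-th successive minimum. -/
def admissibleRadii (p : Seminorm ℝ E) (Λ : Set E) (s : ℕ) : Set ℝ :=
  {r : ℝ | 0 < r ∧ ∃ w : Fin s → E,
    (∀ k, w k ∈ Λ) ∧ LinearIndependent ℝ w ∧ ∀ k, p (w k) ≤ r}

/-- The `s`-th successive minimum of `Λ` with respect to a seminorm `p`, extending `succMin` beyond
the Euclidean norm. It is `0` when `Λ` does not contain `s` linearly independent vectors. -/
noncomputable def successiveMin (p : Seminorm ℝ E) (Λ : Set E) (s : ℕ) : ℝ :=
  sInf (admissibleRadii p Λ s)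

theorem successiveMin_nonneg (p : Seminorm ℝ E) (Λ : Set E) (s : ℕ) : 0 ≤ successiveMin p Λ s :=
  Real.sInf_nonneg fun _ hr => hr.1.le

theorem admissibleRadii_antitone (p : Seminorm ℝ E) (Λ : Set E) :
    Antitone (admissibleRadii p Λ) := by
  rintro s t hst r ⟨hr, w, hwΛ, hw, hwr⟩
  exact ⟨hr, w ∘ Fin.castLE hst, fun _ => hwΛ _, hw.comp _ (Fin.castLE_injective hst),
    fun _ => hwr _⟩

theorem admissibleRadii_nonempty {Λ : Set E} {m : ℕ} {b : Fin m → E}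
    (hb : LinearIndependent ℝ b) (hbΛ : ∀ i, b i ∈ Λ) : (admissibleRadii p Λ m).Nonempty := by
  refine ⟨1 + ∑ i, p (b i), by positivity, b, hbΛ, hb, fun k => ?_⟩
  have := Finset.single_le_sum (fun i _ => apply_nonneg p (b i)) (Finset.mem_univ k)
  linarith

theorem successiveMin_le_successiveMin {Λ : Set E} {s t : ℕ} (hst : s ≤ t)
    (ht : (admissibleRadii p Λ t).Nonempty) : successiveMin p Λ s ≤ successiveMin p Λ t :=
  csInf_le_csInf ⟨0, fun _ hr => hr.1.le⟩ ht (admissibleRadii_antitone p Λ hst)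

theorem exists_forall_seminorm_le_of_subset {Λ S : Set E} (hΛ : ∀ R, {y | y ∈ Λ ∧ p y ≤ R}.Finite)
    (hSΛ : S ⊆ Λ) (hS : S.Nonempty) : ∃ x ∈ S, ∀ y ∈ S, p x ≤ p y := by
  obtain ⟨z, hz⟩ := hS
  have hfin : {y | y ∈ S ∧ p y ≤ p z}.Finite := (hΛ (p z)).subset fun y hy => ⟨hSΛ hy.1, hy.2⟩
  obtain ⟨x, hx, hmin⟩ := Set.exists_min_image _ p hfin ⟨z, hz, le_rfl⟩
  refine ⟨x, hx.1, fun y hy => ?_⟩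
  rcases le_total (p y) (p z) with hyz | hzy
  · exact hmin y ⟨hy, hyz⟩
  · exact hx.2.trans hzy

theorem exists_notMem_span_of_card_lt {K V ι ι' : Type*} [Field K] [AddCommGroup V] [Module K V]
    [Fintype ι] [Fintype ι'] (w : ι → V) {u : ι' → V} (hu : LinearIndependent K u)
    (hcard : Fintype.card ι < Fintype.card ι') : ∃ k, u k ∉ span K (Set.range w) := by
  by_contra! h
  have := FiniteDimensional.span_of_finite K (Set.finite_range w)
  have := finrank_mono (span_le.2 (Set.range_subset_iff.2 h))
  rw [finrank_span_eq_card hu] at this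
  exact (this.trans (finrank_range_le_card w)).not_gt hcard

theorem exists_mem_notMem_span_le_successiveMin {Λ : Set E}
    (hΛ : ∀ R, {y | y ∈ Λ ∧ p y ≤ R}.Finite) {s : ℕ} (w : Fin s → E)
    (hs : (admissibleRadii p Λ (s + 1)).Nonempty) :
    ∃ x ∈ Λ, x ∉ span ℝ (Set.range w) ∧ p x ≤ successiveMin p Λ (s + 1) := by
  have key : ∀ r ∈ admissibleRadii p Λ (s + 1), ∃ y ∈ Λ \ span ℝ (Set.range w), p y ≤ r := by
    rintro r ⟨-, u, huΛ, hu, hur⟩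
    obtain ⟨k, hk⟩ := exists_notMem_span_of_card_lt w hu (by simp)
    exact ⟨u k, ⟨huΛ k, hk⟩, hur k⟩
  obtain ⟨x, hx, hmin⟩ := exists_forall_seminorm_le_of_subset hΛ Set.sdiff_subset
    ((key _ hs.some_mem).imp fun _ => And.left)
  refine ⟨x, hx.1, hx.2, le_csInf hs fun r hr => ?_⟩
  obtain ⟨y, hy, hyr⟩ := key r hr
  exact (hmin y hy).trans hyr

theorem exists_linearIndependent_le_successiveMin {Λ : Set E}
    (hΛ : ∀ R, {y | y ∈ Λ ∧ p y ≤ R}.Finite) {m : ℕ} (hm : (admissibleRadii p Λ m).Nonempty) :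
    ∃ w : Fin m → E, LinearIndependent ℝ w ∧ (∀ i, w i ∈ Λ) ∧
      ∀ i : Fin m, p (w i) ≤ successiveMin p Λ (i + 1) := by
  induction m with
  | zero => exact ⟨Fin.elim0, linearIndependent_empty_type, fun i => i.elim0, fun i => i.elim0⟩
  | succ m ih =>
    obtain ⟨w, hw, hwΛ, hwp⟩ := ih (hm.mono (admissibleRadii_antitone p Λ m.le_succ))
    obtain ⟨x, hxΛ, hx, hxp⟩ := exists_mem_notMem_span_le_successiveMin hΛ w hm
    exact ⟨Fin.snoc w x, linearIndependent_finSnoc.2 ⟨hw, hx⟩,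
      Fin.lastCases (by simpa using hxΛ) fun i => by simpa using hwΛ i,
      Fin.lastCases (by simpa using hxp) fun i => by simpa using hwp i⟩

end SuccessiveMin

section Span

variable {ι E : Type*} [Finite ι] [AddCommGroup E] [Module ℝ E] {b v : ι → E}

theorem span_range_eq_of_linearIndependent_of_mem (hv : LinearIndependent ℝ v)
    (h : ∀ i, v i ∈ span ℝ (Set.range b)) : span ℝ (Set.range v) = span ℝ (Set.range b) := by
  cases nonempty_fintype ι
  have := FiniteDimensional.span_of_finite ℝ (Set.finite_range b)
  refine eq_of_le_of_finrank_le (span_le.2 (Set.range_subset_iff.2 h)) ?_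
  exact (finrank_range_le_card b).trans (finrank_span_eq_card hv).ge

theorem linearIndependent_of_span_int_range_eq (hb : LinearIndependent ℝ b)
    (h : span ℤ (Set.range v) = span ℤ (Set.range b)) : LinearIndependent ℝ v := by
  cases nonempty_fintype ι
  have hspan : span ℝ (Set.range v) = span ℝ (Set.range b) := by
    rw [← span_span_of_tower ℤ ℝ (Set.range v), h, span_span_of_tower]
  rw [linearIndependent_iff_card_eq_finrank_span] at hb ⊢
  rw [hb, Set.finrank, Set.finrank, hspan]

end Span

theorem stmt8_general {E κ : Type*} [AddCommGroup E] [Module ℝ E] [Fintype κ] (p : Seminorm ℝ E)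
    (T : E →ₗ[ℝ] κ → ℝ) {m : ℕ} {b : Fin m → E} (hb : LinearIndependent ℝ b)
    (hfin : ∀ R, {x | x ∈ span ℤ (Set.range b) ∧ p x ≤ R}.Finite) :
    ∃ v : Fin m → E, LinearIndependent ℝ v ∧ span ℤ (Set.range v) = span ℤ (Set.range b) ∧
      (∀ s : Fin m, p (v s) ≤
        m * (Fintype.card κ + 1) ^ m * successiveMin p (span ℤ (Set.range b) : Set E) (s + 1)) ∧
      Monotone fun s => Function.support (T (v s)) := by
  set L := span ℤ (Set.range b)
  have hrad := admissibleRadii_nonempty (p := p) (Λ := L) hb fun i => subset_span ⟨i, rfl⟩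
  have hmono : Monotone fun s : Fin m => successiveMin p (L : Set E) (s + 1) := fun s t hst =>
    successiveMin_le_successiveMin (by simpa using hst)
      (hrad.mono (admissibleRadii_antitone p L t.2))
  obtain ⟨w, hw, hwL, hwp⟩ := exists_linearIndependent_le_successiveMin hfin hrad
  have hspan : span ℝ (Set.range w) = span ℝ (Set.range b) :=
    span_range_eq_of_linearIndependent_of_mem hw fun i => span_le_restrictScalars ℤ ℝ _ (hwL i)
  obtain ⟨v, hvL, hpv, hsupp⟩ := exists_int_basis_of_linearIndependent hfin T hw hwL hmono hwp
  rw [hspan, inf_eq_left.2 (span_le_restrictScalars ℤ ℝ _)] at hvL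
  refine ⟨v, linearIndependent_of_span_int_range_eq hb hvL, hvL, fun s => (hpv s).trans ?_, hsupp⟩
  have hs : (s : ℝ) + 1 ≤ m := by exact_mod_cast s.2
  have hpow : (Fintype.card κ + 1 : ℝ) ^ (s + 1 : ℕ) ≤ (Fintype.card κ + 1) ^ m :=
    pow_le_pow_right₀ (by simp) s.2
  gcongr
  exact successiveMin_nonneg p _ _

section Euclidean

variable {ι : Type*} [Fintype ι]

theorem enorm2_eq_norm_toLp (v : ι → ℝ) : enorm2 v = ‖WithLp.toLp 2 v‖ := by
  simp [EuclideanSpace.norm_eq, enorm2]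

/-- The Euclidean norm `enorm2`, bundled as a seminorm so that `successiveMin` specialises
definitionally to `succMin`. -/
noncomputable def euclideanSeminorm (ι : Type*) [Fintype ι] : Seminorm ℝ (ι → ℝ) :=
  Seminorm.of enorm2
    (fun v w => by simpa only [enorm2_eq_norm_toLp, WithLp.toLp_add] using norm_add_le _ _)
    (fun c v => by simp only [enorm2_eq_norm_toLp, WithLp.toLp_smul, norm_smul])

theorem norm_le_enorm2 (v : ι → ℝ) : ‖v‖ ≤ enorm2 v :=
  (pi_norm_le_iff_of_nonneg (Real.sqrt_nonneg _)).2 fun i => Real.abs_le_sqrt <|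
    Finset.single_le_sum (f := fun j => v j ^ 2) (fun _ _ => sq_nonneg _) (Finset.mem_univ i)

theorem finite_setOf_mem_span_int_enorm2_le {κ : Type*} {b : κ → ι → ℝ}
    (hb : LinearIndependent ℝ b) (R : ℝ) :
    {x | x ∈ span ℤ (Set.range b) ∧ enorm2 x ≤ R}.Finite := by
  let B := Basis.extend hb.linearIndepOn_id
  have : Finite (hb.linearIndepOn_id.extend (Set.subset_univ _)) := Module.Finite.finite_basis B
  have hbB : Set.range b ⊆ Set.range B := by
    rw [Basis.range_extend]
    exact Basis.subset_extend _
  refine (ZSpan.setFinite_inter B (Metric.isBounded_closedBall (x := 0) (r := R))).subset ?_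
  exact fun x hx => ⟨by simpa using (norm_le_enorm2 x).trans hx.2, span_mono hbB hx.1⟩

end Euclidean

theorem stmt8 (n : ℕ) (hn : 0 < n) :
    ∃ c₀ : ℝ, 0 < c₀ ∧
      -- a full-rank lattice in `ℝ^n` is the `ℤ`-span of an `ℝ`-basis `b`
      ∀ b : Fin n → (Fin n → ℝ), LinearIndependent ℝ b →
        ∃ v : Fin n → (Fin n → ℝ),
          -- `v` is a `ℤ`-basis of the lattice
          LinearIndependent ℝ v ∧
          Submodule.span ℤ (Set.range v) = Submodule.span ℤ (Set.range b) ∧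
          -- (i) `|v^s|₂ ≤ c₀ λ_s` (here `v s` plays the role of `v^(s+1)`)
          (∀ s : Fin n, enorm2 (v s) ≤
            c₀ * succMin (↑(Submodule.span ℤ (Set.range b)) : Set (Fin n → ℝ)) ((s : ℕ) + 1)) ∧
          -- (ii) `I(v^s) ⊆ I(v^(s+1))`
          (∀ (s : ℕ) (h1 : s < n) (h2 : s + 1 < n),
            Iset (v ⟨s, h1⟩) ⊆ Iset (v ⟨s + 1, h2⟩)) := by
  refine ⟨n * (n + 1) ^ n, by positivity, fun b hb => ?_⟩
  obtain ⟨v, hv, hspan, hle, hsupp⟩ := stmt8_general (euclideanSeminorm (Fin n)) LinearMap.id hb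
    (finite_setOf_mem_span_int_enorm2_le hb)
  exact ⟨v, hv, hspan, by rwa [Fintype.card_fin] at hle,
    fun s h1 h2 => hsupp (Fin.mk_le_mk.2 s.le_succ)⟩
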